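/- Let α be a primitive element of F_{q^n}, let U be a k-dimensional F_q-subspace of F_{q^n} with 1 ∈ U and best friend F_{q^r}, and set N := (q^n − 1)/(q^r − 1) and S := (q^k − 1)/(q^r − 1). Let b_1, …, b_S ∈ {0, 1, …, N−1} be the (unique) integers such that U ∖ {0} is the disjoint union of the orbits O(α^{b_i}) := α^{b_i}·F_{q^r}^*. For each integer J with 1 ≤ J < N, let m(J) := #{(l, m) : 1 ≤ l, m ≤ S, l ≠ m, b_l − b_m ≡ J (mod N)}. Then for every 1 ≤ J < N, |U ∩ Uα^J| = m(J)(q^r − 1) + 1, i.e., dim_{F_q}(U ∩ Uα^J) = log_q(m(J)(q^r − 1) + 1). Consequently, if U ≠ F_{q^n}, then d_S(orb(U)) = 2(k − L), where L := log_q(M(q^r − 1) + 1) and M := max_{1 ≤ J < N} m(J) (with M := 0 when S = 1). -/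

import Mathlib

/-!
Everything rests on one fact about the cyclic group `K^*`: since `E^*` has index
`N = (q^n - 1)/(q^r - 1)` in it, a power `α ^ z` lies in `E` exactly when `N ∣ z`
(`zpow_mem_iff_dvd`).

A nonzero `x ∈ U ∩ Uα^J` is `α^{b_l} c = α^{b_m} c' α^J` with `c, c' ∈ E^*`; such a `c'` exists iff
`b_l - b_m ≡ J (mod N)`, and `x` determines `l`, `c` and hence `m`. So the nonzero elements of
`U ∩ Uα^J` are in bijection with pairs `((l, m), c)`, which gives the cardinality formula.

For the distance, dividing by a scalar reduces any pair of codewords to `(U, Uα^i)`, and because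
`E` stabilizes `U` only `i mod N` matters. The codewords differ iff `N ∤ i`: the elements of `K`
stabilizing `U` form a friend of `U` (`friendStabilizer`), which equals `E` by maximality. Thus the
distances are exactly the numbers `2 (k - dim (U ∩ Uα^J))` for `1 ≤ J < N`, and the minimum is
reached where `m(J)` is largest. The range of `J` is nonempty, as `N = 1` would force `E = K` and
so `U = K`.
-/

/-- The subspace `Uγ = {uγ : u ∈ U}` of the `F`-vector space `K`. -/
def mulMap (F K : Type) [Field F] [Field K] [Algebra F K] (γ : K) (U : Submodule F K) :
    Submodule F K :=
  U.map (LinearMap.mulRight F γ)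

/-- The cyclic orbit code `orb(U) = {Uγ : γ ∈ K^*}`. -/
def orb (F K : Type) [Field F] [Field K] [Algebra F K] (U : Submodule F K) :
    Set (Submodule F K) :=
  {V : Submodule F K | ∃ γ : K, γ ≠ 0 ∧ V = mulMap F K γ U}

/-- A subfield `E` of `K` (containing `F`) is a friend of `U` if `U` is a vector space
over `E`, i.e. `c * u ∈ U` for all `c ∈ E`, `u ∈ U`. -/
def IsFriend (F K : Type) [Field F] [Field K] [Algebra F K] (E : IntermediateField F K)
    (U : Submodule F K) : Prop :=
  ∀ c ∈ E, ∀ u ∈ U, c * u ∈ U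

/-- The subspace distance `d_S(V,W) = dim V + dim W − 2 dim (V ∩ W)`. -/
noncomputable def sdist (F : Type) [Field F] {M : Type} [AddCommGroup M] [Module F M]
    (V W : Submodule F M) : ℕ :=
  Module.finrank F ↥V + Module.finrank F ↥W - 2 * Module.finrank F ↥(V ⊓ W)

/-- The subspace distance of a code: `d_S(C) = min {d_S(V,W) : V,W ∈ C, V ≠ W}`. -/
noncomputable def cdist (F : Type) [Field F] {M : Type} [AddCommGroup M] [Module F M]
    (C : Set (Submodule F M)) : ℕ :=
  sInf {d : ℕ | ∃ V ∈ C, ∃ W ∈ C, V ≠ W ∧ d = sdist F V W}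

/-! ### Scalar multiples of a subspace -/

lemma mem_mulMap_iff {F K : Type} [Field F] [Field K] [Algebra F K] {γ : K} (hγ : γ ≠ 0)
    {U : Submodule F K} {x : K} : x ∈ mulMap F K γ U ↔ x * γ⁻¹ ∈ U := by
  unfold mulMap
  rw [Submodule.mem_map]
  constructor
  · rintro ⟨y, hy, rfl⟩
    simpa [hγ] using hy
  · intro h
    exact ⟨_, h, by simp [hγ]⟩

lemma finrank_mulMap {F K : Type} [Field F] [Field K] [Algebra F K] {γ : K} (hγ : γ ≠ 0)
    (U : Submodule F K) : Module.finrank F (mulMap F K γ U) = Module.finrank F U :=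
  (Submodule.equivMapOfInjective (LinearMap.mulRight F γ)
    (mul_left_injective₀ hγ) U).finrank_eq.symm

lemma mulMap_inf {F K : Type} [Field F] [Field K] [Algebra F K] {γ : K} (hγ : γ ≠ 0)
    (U V : Submodule F K) : mulMap F K γ (U ⊓ V) = mulMap F K γ U ⊓ mulMap F K γ V := by
  ext x
  simp [mem_mulMap_iff hγ]

lemma mulMap_mulMap {F K : Type} [Field F] [Field K] [Algebra F K] {γ δ : K} (hγ : γ ≠ 0)
    (hδ : δ ≠ 0) (U : Submodule F K) :
    mulMap F K γ (mulMap F K δ U) = mulMap F K (δ * γ) U := by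
  ext x
  rw [mem_mulMap_iff hγ, mem_mulMap_iff hδ, mem_mulMap_iff (mul_ne_zero hδ hγ), mul_inv, mul_assoc,
    mul_comm γ⁻¹]

lemma mulMap_eq_self_of_friend {F K : Type} [Field F] [Field K] [Algebra F K]
    {E : IntermediateField F K} {U : Submodule F K} (h : IsFriend F K E U) {e : K} (he : e ∈ E)
    (he0 : e ≠ 0) : mulMap F K e U = U := by
  ext x
  rw [mem_mulMap_iff he0]
  constructor
  · intro hx
    have := h e he _ hx
    rwa [mul_comm, mul_assoc, inv_mul_cancel₀ he0, mul_one] at this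
  · intro hx
    rw [mul_comm]
    exact h _ (inv_mem he) _ hx

/-! ### The stabilizer and the best friend -/

/-- The elements `c` with `c U ⊆ U`, as an intermediate field. Closure under inverses is automatic
because `K` is algebraic over `F`. -/
noncomputable def friendStabilizer (F K : Type) [Field F] [Field K] [Finite K] [Algebra F K]
    (U : Submodule F K) : IntermediateField F K :=
  subalgebraEquivIntermediateField
    { carrier := {c | ∀ u ∈ U, c * u ∈ U}
      mul_mem' := fun {a b} ha hb u hu => by
        rw [mul_assoc]; exact ha _ (hb _ hu)
      add_mem' := fun {a b} ha hb u hu => by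
        rw [add_mul]; exact U.add_mem (ha _ hu) (hb _ hu)
      algebraMap_mem' := fun c u hu => by
        rw [← Algebra.smul_def]; exact U.smul_mem c hu }

lemma mem_friendStabilizer {F K : Type} [Field F] [Field K] [Finite K] [Algebra F K]
    {U : Submodule F K} {c : K} : c ∈ friendStabilizer F K U ↔ ∀ u ∈ U, c * u ∈ U :=
  Iff.rfl

/-- Converse of `mulMap_eq_self_of_friend` for a friend of largest cardinality. -/
lemma mem_of_mulMap_eq_self {F K : Type} [Field F] [Field K] [Finite K] [Algebra F K]
    {E : IntermediateField F K} {U : Submodule F K} (h : IsFriend F K E U)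
    (hbest : ∀ E' : IntermediateField F K, IsFriend F K E' U → Nat.card ↥E' ≤ Nat.card ↥E)
    {γ : K} (hγ : γ ≠ 0) (hU : mulMap F K γ U = U) : γ ∈ E := by
  have hle : (E : Set K) ⊆ friendStabilizer F K U := fun c hc => mem_friendStabilizer.2 (h c hc)
  have hcard := hbest (friendStabilizer F K U) fun c hc => mem_friendStabilizer.1 hc
  have heq : (E : Set K) = friendStabilizer F K U :=
    Set.eq_of_subset_of_ncard_le hle hcard (Set.toFinite _)
  have hmem : γ ∈ (friendStabilizer F K U : Set K) := mem_friendStabilizer.2 fun u hu => by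
    rw [← hU, mem_mulMap_iff hγ, mul_comm γ, mul_assoc, mul_inv_cancel₀ hγ, mul_one]
    exact hu
  rwa [← heq] at hmem

/-! ### Exponents modulo `N` -/

/-- `E^*` is the subgroup of index `N` in the cyclic group generated by `α`, that is, the group
generated by `α ^ N`. -/
lemma zpow_mem_iff_dvd {F K : Type} [Field F] [Field K] [Finite K] [Algebra F K]
    {α : K} (hα0 : α ≠ 0) (hα : ∀ x : K, x ≠ 0 → ∃ i : ℕ, x = α ^ i)
    (E : IntermediateField F K) (z : ℤ) :
    α ^ z ∈ E ↔ (((Nat.card K - 1) / (Nat.card E - 1) : ℕ) : ℤ) ∣ z := by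
  set N := (Nat.card K - 1) / (Nat.card E - 1) with hN
  let a : Kˣ := Units.mk0 α hα0
  let H : Subgroup Kˣ := (Units.map (E.val : E →* K)).range
  have hinj : Function.Injective (Units.map (E.val : E →* K)) :=
    Units.map_injective E.val.injective
  have hH : Nat.card H = Nat.card E - 1 := by
    rw [← Nat.card_units E]
    exact (Nat.card_congr (MonoidHom.ofInjective hinj).toEquiv).symm
  have hEpos : 0 < Nat.card E - 1 := hH ▸ Nat.card_pos
  have hmul : Nat.card H * H.index = Nat.card K - 1 := by
    rw [Subgroup.card_mul_index, Nat.card_units]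
  have hidx : H.index = N := by
    rw [hN, ← hmul, hH, Nat.mul_div_cancel_left _ hEpos]
  have hmem : ∀ u : Kˣ, u ∈ H ↔ (u : K) ∈ E := by
    intro u
    constructor
    · rintro ⟨v, rfl⟩
      exact (v : E).2
    · intro hu
      have hne : (⟨u, hu⟩ : E) ≠ 0 := fun h0 => u.ne_zero (congrArg Subtype.val h0)
      exact ⟨Units.mk0 ⟨u, hu⟩ hne, Units.ext rfl⟩
  have hord : orderOf a = Nat.card K - 1 := by
    rw [← Nat.card_units]
    refine orderOf_eq_card_of_forall_mem_zpowers fun x => ?_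
    obtain ⟨i, hi⟩ := hα x x.ne_zero
    exact ⟨i, Units.ext (by simp [a, hi])⟩
  have hval : ((a ^ z : Kˣ) : K) = α ^ z := by simp [a]
  rw [← hval, ← hmem]
  constructor
  · intro h
    have h1 : (a ^ z) ^ Nat.card H = 1 := by
      have h2 : (⟨a ^ z, h⟩ : H) ^ Nat.card H = 1 := pow_card_eq_one'
      exact congrArg Subtype.val h2
    rw [← zpow_natCast, ← zpow_mul, ← orderOf_dvd_iff_zpow_eq_one, hord, ← hmul, hidx, mul_comm z,
      Nat.cast_mul] at h1
    exact Int.dvd_of_mul_dvd_mul_left (by rw [hH]; exact_mod_cast hEpos.ne') h1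
  · rintro ⟨t, rfl⟩
    rw [zpow_mul, zpow_natCast, ← hidx]
    exact H.zpow_mem (H.pow_index_mem a) t

lemma sub_mod_eq_iff_dvd {N x y J : ℕ} (hy : y < N) (hJ : J < N) :
    (x + N - y) % N = J ↔ (N : ℤ) ∣ (x : ℤ) - y - J := by
  have h1 : (x + N - y) % N = J ↔ J ≡ x + N - y [MOD N] := by
    unfold Nat.ModEq
    rw [Nat.mod_eq_of_lt hJ, eq_comm]
  have h2 : ((x + N - y : ℕ) : ℤ) - J = (x - y - J : ℤ) + N := by omega
  rw [h1, Nat.modEq_iff_dvd, h2, dvd_add_self_right]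

lemma eq_of_dvd_sub {N x y : ℕ} (hx : x < N) (hy : y < N) (h : (N : ℤ) ∣ (x : ℤ) - y) :
    x = y :=
  (Nat.ModEq.eq_of_lt_of_lt ((Nat.modEq_iff_dvd).2 h) hy hx).symm

/-! ### Intersections and the distance of the orbit code -/

/-- The nonzero elements of `U ∩ Uα^J` correspond to pairs `((l, m), c)` with `c ∈ E^*` and
`b_l - b_m ≡ J (mod N)`, through `α^{b_l} c`. -/
lemma card_inf_mulMap {F K : Type} [Field F] [Field K] [Finite K] [Algebra F K]
    {α : K} (hα0 : α ≠ 0) (U : Submodule F K) (E : IntermediateField F K)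
    {N S : ℕ} (hdvd : ∀ z : ℤ, α ^ z ∈ E ↔ (N : ℤ) ∣ z)
    (b : Fin S → ℕ) (hblt : ∀ i, b i < N) (hbinj : Function.Injective b)
    (hcover : ∀ x : K, (x ∈ U ∧ x ≠ 0) ↔ ∃ i : Fin S, ∃ c ∈ E, c ≠ 0 ∧ x = α ^ (b i) * c)
    {J : ℕ} (hJ1 : 1 ≤ J) (hJN : J < N) :
    Nat.card ↥(U ⊓ mulMap F K (α ^ J) U) =
      Nat.card {p : Fin S × Fin S // p.1 ≠ p.2 ∧ (b p.1 + N - b p.2) % N = J} *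
        (Nat.card E - 1) + 1 := by
  have hαJ : α ^ J ≠ 0 := pow_ne_zero _ hα0
  let P := {p : Fin S × Fin S // p.1 ≠ p.2 ∧ (b p.1 + N - b p.2) % N = J}
  let T : Set K := {x | x ∈ U ⊓ mulMap F K (α ^ J) U ∧ x ≠ 0}
  have hins : ((U ⊓ mulMap F K (α ^ J) U : Submodule F K) : Set K) = insert 0 T := by
    ext x
    by_cases hx : x = 0
    · subst hx; simp
    · simp [T, hx]
  have h0 : (0 : K) ∉ T := fun h => h.2 rfl
  have hcard : Nat.card ↥(U ⊓ mulMap F K (α ^ J) U) = Nat.card T + 1 := by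
    change Set.ncard ((U ⊓ mulMap F K (α ^ J) U : Submodule F K) : Set K) = Set.ncard T + 1
    rw [hins, Set.ncard_insert_of_notMem h0 (Set.toFinite _)]
  have hne : ∀ u : Eˣ, ((u : E) : K) ≠ 0 := fun u h => u.ne_zero (Subtype.ext h)
  have hf : ∀ pu : P × Eˣ, α ^ b pu.1.1.1 * ((pu.2 : E) : K) ∈ T := by
    rintro ⟨⟨⟨l, j⟩, hlj, hmod⟩, u⟩
    rw [sub_mod_eq_iff_dvd (hblt _) hJN, ← hdvd] at hmod
    refine ⟨⟨((hcover _).2 ⟨l, u, (u : E).2, hne u, rfl⟩).1, ?_⟩,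
      mul_ne_zero (pow_ne_zero _ hα0) (hne u)⟩
    refine (mem_mulMap_iff hαJ).2 ((hcover _).2
      ⟨j, α ^ ((b l : ℤ) - b j - J) * (u : E), mul_mem hmod (u : E).2,
        mul_ne_zero (zpow_ne_zero _ hα0) (hne u), ?_⟩).1
    dsimp only
    rw [zpow_sub₀ hα0, zpow_sub₀ hα0]
    simp only [zpow_natCast]
    field_simp
  let f : P × Eˣ → T := fun pu => ⟨_, hf pu⟩
  have hbij : Function.Bijective f := by
    constructor
    · rintro ⟨⟨⟨l, j⟩, hlj, hmod⟩, u⟩ ⟨⟨⟨l', j'⟩, hlj', hmod'⟩, u'⟩ heq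
      have heq' : α ^ b l * ((u : E) : K) = α ^ b l' * ((u' : E) : K) :=
        congrArg Subtype.val heq
      have hl : l = l' := by
        refine hbinj (eq_of_dvd_sub (hblt _) (hblt _) ((hdvd _).1 ?_))
        have : α ^ ((b l : ℤ) - b l') = ((u' : E) : K) * ((u : E) : K)⁻¹ := by
          rw [zpow_sub₀ hα0, zpow_natCast, zpow_natCast, ← div_eq_mul_inv,
            div_eq_div_iff (pow_ne_zero _ hα0) (hne u), heq', mul_comm]
        rw [this]
        exact mul_mem (u' : E).2 (inv_mem (u : E).2)
      subst hl
      have hu : u = u' :=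
        Units.ext (Subtype.ext (mul_left_cancel₀ (pow_ne_zero _ hα0) heq'))
      have hj : j = j' := by
        refine hbinj (eq_of_dvd_sub (hblt _) (hblt _) ?_)
        rw [sub_mod_eq_iff_dvd (hblt _) hJN] at hmod hmod'
        have hsplit : (b j : ℤ) - b j' = (b l - b j' - J) - (b l - b j - J) := by ring
        rw [hsplit]
        exact dvd_sub hmod' hmod
      subst hu hj
      rfl
    · rintro ⟨x, ⟨hxU, hxV⟩, hx0⟩
      obtain ⟨l, c, hc, hc0, hxl⟩ := (hcover x).1 ⟨hxU, hx0⟩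
      obtain ⟨j, d, hd, hd0, hxj⟩ := (hcover (x * (α ^ J)⁻¹)).1
        ⟨(mem_mulMap_iff hαJ).1 hxV, mul_ne_zero hx0 (inv_ne_zero hαJ)⟩
      have hmod : (b l + N - b j) % N = J := by
        rw [sub_mod_eq_iff_dvd (hblt _) hJN, ← hdvd]
        have : α ^ ((b l : ℤ) - b j - J) = d * c⁻¹ := by
          rw [hxl] at hxj
          rw [zpow_sub₀ hα0, zpow_sub₀ hα0]
          simp only [zpow_natCast]
          field_simp at hxj ⊢
          linear_combination hxj
        rw [this]
        exact mul_mem hd (inv_mem hc)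
      have hlj : l ≠ j := by
        rintro rfl
        rw [Nat.add_sub_cancel_left, Nat.mod_self] at hmod
        omega
      have hcE : (⟨c, hc⟩ : E) ≠ 0 := fun h => hc0 (congrArg Subtype.val h)
      exact ⟨(⟨(l, j), hlj, hmod⟩, Units.mk0 ⟨c, hc⟩ hcE), Subtype.ext hxl.symm⟩
  rw [hcard, ← Nat.card_congr (Equiv.ofBijective f hbij), Nat.card_prod, Nat.card_units]

/-- Let `α` be a primitive element of `F_{q^n}`, `U` a `k`-dimensional
subspace with `1 ∈ U` and best friend `F_{q^r}` (realized as `E`), and set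
`N := (q^n − 1)/(q^r − 1)`, `S := (q^k − 1)/(q^r − 1)`.  Let `b_1, …, b_S ∈ {0,…,N−1}`
(distinct) be such that `U∖{0}` is the disjoint union of the orbits
`O(α^{b_i}) = α^{b_i}·F_{q^r}^*`.  For `1 ≤ J < N` let `m(J)` count the pairs `(l,m)`,
`l ≠ m`, with `b_l − b_m ≡ J (mod N)`.  Then `|U ∩ Uα^J| = m(J)(q^r − 1) + 1` for every
`1 ≤ J < N` (equivalently, `dim(U ∩ Uα^J) = log_q(m(J)(q^r−1)+1)`), and if `U ≠ F_{q^n}`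
then `d_S(orb(U)) = 2(k − L)` where `q^L = M(q^r − 1) + 1` and `M = max_{1 ≤ J < N} m(J)`. -/
theorem stmt13 (q n k r : ℕ) (F K : Type) [Field F] [Field K] [Finite F] [Finite K]
    [Algebra F K] (hq : Nat.card F = q) (hn : Module.finrank F K = n)
    (α : K) (hα : ∀ x : K, x ≠ 0 → ∃ i : ℕ, x = α ^ i)
    (U : Submodule F K) (hU1 : (1 : K) ∈ U) (hUk : Module.finrank F ↥U = k)
    (E : IntermediateField F K) (hEr : Nat.card ↥E = q ^ r)
    (hfriend : IsFriend F K E U)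
    (hbest : ∀ E' : IntermediateField F K, IsFriend F K E' U →
      Nat.card ↥E' ≤ Nat.card ↥E)
    (N S : ℕ) (hN : N = (q ^ n - 1) / (q ^ r - 1)) (hS : S = (q ^ k - 1) / (q ^ r - 1))
    (b : Fin S → ℕ) (hblt : ∀ i, b i < N) (hbinj : Function.Injective b)
    (hcover : ∀ x : K, (x ∈ U ∧ x ≠ 0) ↔
      ∃ i : Fin S, ∃ c ∈ E, c ≠ 0 ∧ x = α ^ (b i) * c)
    (m : ℕ → ℕ)
    (hm : ∀ J : ℕ, m J =
      Nat.card {p : Fin S × Fin S // p.1 ≠ p.2 ∧ (b p.1 + N - b p.2) % N = J}) :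
    (∀ J : ℕ, 1 ≤ J → J < N →
      Nat.card ↥(U ⊓ mulMap F K (α ^ J) U) = m J * (q ^ r - 1) + 1) ∧
    (U ≠ ⊤ → ∃ L M : ℕ,
      M = sSup {m' : ℕ | ∃ J : ℕ, 1 ≤ J ∧ J < N ∧ m' = m J} ∧
      q ^ L = M * (q ^ r - 1) + 1 ∧
      cdist F (orb F K U) = 2 * (k - L)) := by
  have : Finite E := Finite.of_injective _ Subtype.val_injective
  have hq2 : 2 ≤ q := hq ▸ Finite.one_lt_card
  have hKn : Nat.card K = q ^ n := by
    rw [← hq, ← hn]; exact Module.natCard_eq_pow_finrank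
  have hNE : N = (Nat.card K - 1) / (Nat.card E - 1) := by rw [hN, hKn, hEr]
  -- `α = 0` would make `1` the only unit, hence `K = 𝔽₂` and `N ≤ 1`.
  have hα0 : 1 < N → α ≠ 0 := by
    rintro hN1 rfl
    have hsub : Subsingleton Kˣ := by
      have key : ∀ x : K, x ≠ 0 → x = 1 := by
        intro x hx
        obtain ⟨i, rfl⟩ := hα x hx
        rcases Nat.eq_zero_or_pos i with rfl | hi
        · simp
        · exact absurd (zero_pow hi.ne') hx
      exact ⟨fun u v => Units.ext ((key _ u.ne_zero).trans (key _ v.ne_zero).symm)⟩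
    have hK1 : Nat.card K - 1 = 1 := by
      rw [← Nat.card_units]; exact Nat.card_unique
    rw [hNE, hK1] at hN1
    exact absurd (Nat.div_le_self 1 (Nat.card E - 1)) (by omega)
  have hcard : ∀ J : ℕ, 1 ≤ J → J < N →
      Nat.card ↥(U ⊓ mulMap F K (α ^ J) U) = m J * (q ^ r - 1) + 1 := by
    intro J hJ1 hJN
    have h0 := hα0 (by omega)
    have hdvd := zpow_mem_iff_dvd h0 hα E
    rw [← hNE] at hdvd
    rw [card_inf_mulMap h0 U E hdvd b hblt hbinj hcover hJ1 hJN, hm, hEr]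
  refine ⟨hcard, fun hUtop => ?_⟩
  have hN1 : 1 < N := by
    by_contra hN1
    have hEK : Nat.card E = Nat.card K := by
      have hle : Nat.card E ≤ Nat.card K := Nat.card_le_card_of_injective _ Subtype.val_injective
      have hE1 : 1 < Nat.card E := Finite.one_lt_card
      -- As `E^*` is a subgroup of `K^*`, its order divides `|K^*|`.
      have hdiv : Nat.card E - 1 ∣ Nat.card K - 1 := by
        rw [← Nat.card_units, ← Nat.card_units]
        exact Subgroup.card_dvd_of_injective (Units.map (E.val : E →* K))
          (Units.map_injective E.val.injective)
      obtain ⟨t, ht⟩ := hdiv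
      rw [hNE, ht, Nat.mul_div_cancel_left _ (by omega)] at hN1
      have : (Nat.card E - 1) * t ≤ (Nat.card E - 1) * 1 := Nat.mul_le_mul_left _ (by omega)
      omega
    have hEtop : (E : Set K) = Set.univ := by
      refine Set.eq_of_subset_of_ncard_le (Set.subset_univ _) ?_ (Set.toFinite _)
      rw [Set.ncard_univ, ← hEK]
      exact le_rfl
    refine hUtop (eq_top_iff.2 fun x _ => ?_)
    have hxE : x ∈ (E : Set K) := hEtop ▸ Set.mem_univ x
    simpa using hfriend x hxE 1 hU1
  have h0 := hα0 hN1
  have hdvd := zpow_mem_iff_dvd h0 hα E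
  rw [← hNE] at hdvd
  have hcardpow : ∀ V : Submodule F K, Nat.card V = q ^ Module.finrank F V := fun V => by
    rw [← hq]; exact Module.natCard_eq_pow_finrank
  set A : Set ℕ := {m' : ℕ | ∃ J : ℕ, 1 ≤ J ∧ J < N ∧ m' = m J} with hA
  have hAfin : A.Finite := by
    refine ((Set.finite_Iio N).image m).subset ?_
    rintro _ ⟨J, _, hJN, rfl⟩
    exact ⟨J, hJN, rfl⟩
  obtain ⟨J₀, hJ₀1, hJ₀N, hJ₀⟩ : sSup A ∈ A :=
    Nat.sSup_mem ⟨m 1, 1, le_rfl, hN1, rfl⟩ hAfin.bddAbove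
  have hmax : ∀ J, 1 ≤ J → J < N → m J ≤ m J₀ := fun J h1 h2 =>
    hJ₀ ▸ le_csSup hAfin.bddAbove ⟨J, h1, h2, rfl⟩
  let L : ℕ := Module.finrank F ↥(U ⊓ mulMap F K (α ^ J₀) U)
  have hLmax : ∀ J, 1 ≤ J → J < N → Module.finrank F ↥(U ⊓ mulMap F K (α ^ J) U) ≤ L := by
    intro J h1 h2
    refine (Nat.pow_le_pow_iff_right (a := q) (by omega)).1 ?_
    rw [← hcardpow, ← hcardpow, hcard J h1 h2, hcard J₀ hJ₀1 hJ₀N]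
    exact Nat.add_le_add_right (Nat.mul_le_mul_right _ (hmax J h1 h2)) 1
  have hdist : ∀ γ δ : K, γ ≠ 0 → δ ≠ 0 → sdist F (mulMap F K γ U) (mulMap F K δ U) =
      2 * (k - Module.finrank F ↥(U ⊓ mulMap F K (δ * γ⁻¹) U)) := by
    intro γ δ hγ hδ
    have hδγ : mulMap F K δ U = mulMap F K γ (mulMap F K (δ * γ⁻¹) U) := by
      rw [mulMap_mulMap hγ (mul_ne_zero hδ (inv_ne_zero hγ)), inv_mul_cancel_right₀ hγ]
    unfold sdist
    rw [finrank_mulMap hγ, finrank_mulMap hδ, hδγ, ← mulMap_inf hγ, finrank_mulMap hγ, hUk]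
    omega
  refine ⟨L, sSup A, rfl, ?_, ?_⟩
  · rw [hJ₀, ← hcard J₀ hJ₀1 hJ₀N, hcardpow]
  unfold cdist
  refine IsLeast.csInf_eq ⟨?_, ?_⟩
  · refine ⟨mulMap F K 1 U, ⟨1, one_ne_zero, rfl⟩, mulMap F K (α ^ J₀) U,
      ⟨_, pow_ne_zero _ h0, rfl⟩, ?_, ?_⟩
    · rw [mulMap_eq_self_of_friend hfriend (one_mem E) one_ne_zero]
      intro heq
      have hmem := mem_of_mulMap_eq_self hfriend hbest (pow_ne_zero J₀ h0) heq.symm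
      rw [← zpow_natCast, hdvd, Int.natCast_dvd_natCast] at hmem
      exact absurd (Nat.le_of_dvd hJ₀1 hmem) (by omega)
    · rw [hdist 1 _ one_ne_zero (pow_ne_zero _ h0), inv_one, mul_one]
  · rintro _ ⟨_, ⟨γ, hγ, rfl⟩, _, ⟨δ, hδ, rfl⟩, hne, rfl⟩
    rw [hdist γ δ hγ hδ]
    obtain ⟨i, hi⟩ := hα (δ * γ⁻¹) (mul_ne_zero hδ (inv_ne_zero hγ))
    rw [hi]
    -- Only the exponent modulo `N` matters, because `α ^ (N * t) ∈ E`.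
    have hred : mulMap F K (α ^ i) U = mulMap F K (α ^ (i % N)) U := by
      have hmem : α ^ (N * (i / N)) ∈ E := by
        rw [← zpow_natCast, hdvd, Int.natCast_dvd_natCast]
        exact dvd_mul_right _ _
      conv_lhs => rw [← Nat.div_add_mod i N, pow_add,
        ← mulMap_mulMap (pow_ne_zero _ h0) (pow_ne_zero _ h0),
        mulMap_eq_self_of_friend hfriend hmem (pow_ne_zero _ h0)]
    have hJ1 : 1 ≤ i % N := by
      refine Nat.one_le_iff_ne_zero.2 fun hz => hne ?_
      rw [hz, pow_zero, mulMap_eq_self_of_friend hfriend (one_mem E) one_ne_zero] at hred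
      have hδ' : δ = α ^ i * γ := by rw [← hi, inv_mul_cancel_right₀ hγ]
      rw [hδ', ← mulMap_mulMap hγ (pow_ne_zero _ h0), hred]
    rw [hred]
    have := hLmax (i % N) hJ1 (Nat.mod_lt _ (by omega))
    omega
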